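/- For every k ∈ ℝ³ and for both choices of sign, the 2×2 complex matrix W^{(±)}(k) := d^{(±)}(k)·I − i·a_x^{(±)}(k)·σx ± i·a_y^{(±)}(k)·σy − i·a_z^{(±)}(k)·σz is unitary. -/

import Mathlib

noncomputable section

/-- Pauli matrix σx. -/
def σx : Matrix (Fin 2) (Fin 2) ℂ := !![0, 1; 1, 0]
/-- Pauli matrix σy. -/
def σy : Matrix (Fin 2) (Fin 2) ℂ := !![0, -Complex.I; Complex.I, 0]
/-- Pauli matrix σz. -/
def σz : Matrix (Fin 2) (Fin 2) ℂ := !![1, 0; 0, -1]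

/-- A real quaternion-like combination of norm one is unitary. -/
theorem walk_aux (s d x y z : ℝ) (hs : s ^ 2 = 1) (h : d ^ 2 + x ^ 2 + y ^ 2 + z ^ 2 = 1) :
    ((d : ℂ) • (1 : Matrix (Fin 2) (Fin 2) ℂ)
      - (Complex.I * (x : ℂ)) • σx
      + ((s : ℂ) * (Complex.I * (y : ℂ))) • σy
      - (Complex.I * (z : ℂ)) • σz) ∈ Matrix.unitaryGroup (Fin 2) ℂ := by
  have e : d ^ 2 + x ^ 2 + s ^ 2 * y ^ 2 + z ^ 2 = 1 := by rw [hs]; linarith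
  rw [Matrix.mem_unitaryGroup_iff]
  ext i j
  fin_cases i <;> fin_cases j <;>
    simp [σx, σy, σz, Matrix.mul_apply, Fin.sum_univ_two, Matrix.star_apply, Complex.ext_iff] <;>
    constructor <;> first | ring1 | linear_combination e

/-- The one-particle walk matrix `W^{(±)}(k)` of the Weyl cellular automaton is unitary
for every momentum `k ∈ ℝ³` and both choices of sign (`s = 1` or `s = -1`). -/
theorem weyl_walk_unitary (s : ℝ) (hs : s = 1 ∨ s = -1) (k : Fin 3 → ℝ) :
    let c : Fin 3 → ℝ := fun j => Real.cos (k j / Real.sqrt 3)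
    let sn : Fin 3 → ℝ := fun j => Real.sin (k j / Real.sqrt 3)
    let d : ℝ := c 0 * c 1 * c 2 - s * (sn 0 * sn 1 * sn 2)
    let ax : ℝ := sn 0 * c 1 * c 2 + s * (c 0 * sn 1 * sn 2)
    let ay : ℝ := c 0 * sn 1 * c 2 - s * (sn 0 * c 1 * sn 2)
    let az : ℝ := c 0 * c 1 * sn 2 + s * (sn 0 * sn 1 * c 2)
    ((d : ℂ) • (1 : Matrix (Fin 2) (Fin 2) ℂ)
      - (Complex.I * (ax : ℂ)) • σx
      + ((s : ℂ) * (Complex.I * (ay : ℂ))) • σy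
      - (Complex.I * (az : ℂ)) • σz) ∈ Matrix.unitaryGroup (Fin 2) ℂ := by
  intro c sn d ax ay az
  have hs2 : s ^ 2 = 1 := by rcases hs with rfl | rfl <;> norm_num
  have h (j : Fin 3) : sn j ^ 2 = 1 - c j ^ 2 := by
    have := Real.sin_sq_add_cos_sq (k j / Real.sqrt 3)
    simp only [sn, c]; linarith
  apply walk_aux s d ax ay az hs2
  have : d ^ 2 + ax ^ 2 + ay ^ 2 + az ^ 2 =
      c 0 ^ 2 * c 1 ^ 2 * c 2 ^ 2 + s ^ 2 * (sn 0 ^ 2 * sn 1 ^ 2 * sn 2 ^ 2)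
      + sn 0 ^ 2 * c 1 ^ 2 * c 2 ^ 2 + s ^ 2 * (c 0 ^ 2 * sn 1 ^ 2 * sn 2 ^ 2)
      + c 0 ^ 2 * sn 1 ^ 2 * c 2 ^ 2 + s ^ 2 * (sn 0 ^ 2 * c 1 ^ 2 * sn 2 ^ 2)
      + c 0 ^ 2 * c 1 ^ 2 * sn 2 ^ 2 + s ^ 2 * (sn 0 ^ 2 * sn 1 ^ 2 * c 2 ^ 2) := by
    simp only [d, ax, ay, az]; ring
  rw [this, hs2, h 0, h 1, h 2]
  ring
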